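/- arXiv:1711.07925 — 2 statements merged into one kernel-verified Lean document; each statement's English description precedes it below -/
import Mathlib

section
/- Let K ≥ 1 and let (λᵗ, Pᵗ) be a rank-K feasible point with λᵗ_k > 0 for all k and Pᵗ^(n)_{i k} > 0 for all n, i, k. Define Ψ_{j k} = λᵗ_k ∏_n Pᵗ^(n)_{j_n k} / (∑_κ λᵗ_κ ∏_n Pᵗ^(n)_{j_n κ}), the component masses M_k = ∑_j Y_j Ψ_{j k}, and the weighted marginals y^(n)_{i k} = ∑_{j : j_n = i} Y_j Ψ_{j k}. Assume M_k > 0 for all k. Then the EM update λ⁺_k = M_k, P⁺^(n)_{i k} = y^(n)_{i k} / M_k is a rank-K feasible point, and it minimizes the surrogate: G(λ⁺, P⁺) ≤ G(λ, P) for every rank-K feasible point (λ, P) with λ_k > 0 for all k and with P^(n)_{i k} > 0 whenever y^(n)_{i k} > 0. (In G(λ⁺, P⁺), terms with weight Y_j Ψ_{j k} = 0 contribute zero.) -/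
/-!
Exchanging the sums over cells and components splits the surrogate, up to a constant, into one cost
per component `k`. If `w j = Y_j Ψ_{jk}` has total mass `M` and normalized marginals `qₙ`, this cost
is `(l - M log l) - M ∑ₙ ∑ᵢ qₙ(i) log pₙ(i)`, so that the scale `l` and the factors `pₙ` decouple.
The inequality `a log b - b ≤ a log a - a` gives the optimal scale `l = M` at once, and, summed over
`i`, it is Gibbs' inequality, which gives the optimal factors `pₙ = qₙ`.
-/

open Real

lemma mul_log_sub_le_mul_log_sub_self {a b : ℝ} (ha : 0 ≤ a) (hb : 0 ≤ b) (hab : 0 < a → 0 < b) :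
    a * log b - b ≤ a * log a - a := by
  rcases ha.eq_or_lt with rfl | ha
  · simpa using hb
  · have hb := hab ha
    have hlog : log b - log a ≤ b / a - 1 := by
      rw [← log_div hb.ne' ha.ne']
      exact log_le_sub_one_of_pos (div_pos hb ha)
    have hscaled : a * (log b - log a) ≤ b - a := by
      calc a * (log b - log a) ≤ a * (b / a - 1) := mul_le_mul_of_nonneg_left hlog ha.le
        _ = b - a := by field_simp
    linarith

lemma sum_mul_log_le_sum_mul_log_self {α : Type*} {s : Finset α} {q p : α → ℝ}
    (hq : ∀ i ∈ s, 0 ≤ q i) (hp : ∀ i ∈ s, 0 ≤ p i) (hqp : ∀ i ∈ s, 0 < q i → 0 < p i)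
    (hsum : ∑ i ∈ s, p i ≤ ∑ i ∈ s, q i) :
    ∑ i ∈ s, q i * log (p i) ≤ ∑ i ∈ s, q i * log (q i) := by
  have h := Finset.sum_le_sum fun i hi =>
    mul_log_sub_le_mul_log_sub_self (hq i hi) (hp i hi) (hqp i hi)
  rw [Finset.sum_sub_distrib, Finset.sum_sub_distrib] at h
  linarith

section Marginal

variable {β α : Type*} [Fintype β] [DecidableEq α]

/-- The marginal of the weights `w` along `g`, that is, the push-forward of `w` by `g`. Along the
`n`-th coordinate of the cells it is the weighted marginal `y^(n)_{ik}` of the EM update. -/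
def marginal (w : β → ℝ) (g : β → α) (i : α) : ℝ :=
  ∑ j, if g j = i then w j else 0

/-- The marginal of `w` along `g`, divided by the total mass of `w`; it is `0` by convention when
that mass vanishes. -/
noncomputable def normalizedMarginal (w : β → ℝ) (g : β → α) (i : α) : ℝ :=
  marginal w g i / ∑ j, w j

variable {w : β → ℝ}

lemma marginal_nonneg (hw : ∀ j, 0 ≤ w j) (g : β → α) (i : α) : 0 ≤ marginal w g i :=
  Finset.sum_nonneg fun j _ => ite_nonneg (hw j) le_rfl

lemma normalizedMarginal_nonneg (hw : ∀ j, 0 ≤ w j) (g : β → α) (i : α) :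
    0 ≤ normalizedMarginal w g i :=
  div_nonneg (marginal_nonneg hw g i) (Finset.sum_nonneg fun j _ => hw j)

lemma marginal_pos_of_normalizedMarginal_pos (hw : ∀ j, 0 ≤ w j) {g : β → α} {i : α}
    (h : 0 < normalizedMarginal w g i) : 0 < marginal w g i :=
  (marginal_nonneg hw g i).lt_of_ne' (div_ne_zero_iff.mp h.ne').1

variable [Fintype α]

lemma sum_marginal_mul (w : β → ℝ) (g : β → α) (f : α → ℝ) :
    ∑ i, marginal w g i * f i = ∑ j, w j * f (g j) := by
  simp_rw [marginal, Finset.sum_mul]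
  rw [Finset.sum_comm]
  simp [ite_mul]

lemma mass_mul_sum_normalizedMarginal_mul (hM : ∑ j, w j ≠ 0) (g : β → α) (f : α → ℝ) :
    (∑ j, w j) * ∑ i, normalizedMarginal w g i * f i = ∑ j, w j * f (g j) := by
  rw [← sum_marginal_mul w, Finset.mul_sum]
  refine Finset.sum_congr rfl fun i _ => ?_
  rw [normalizedMarginal, ← mul_assoc, mul_div_cancel₀ _ hM]

lemma sum_normalizedMarginal (hM : ∑ j, w j ≠ 0) (g : β → α) :
    ∑ i, normalizedMarginal w g i = 1 := by
  have hmass := mass_mul_sum_normalizedMarginal_mul hM g fun _ => 1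
  exact mul_left_cancel₀ hM (by simpa only [mul_one] using hmass)

end Marginal

section Component

variable {β ι : Type*} {α : ι → Type*} [Fintype β] [Fintype ι]

/-- The part of the surrogate that depends on a single component, with scale `l` and factors `p`,
when the cell `j` carries weight `w j` and has coordinates `x n j`. -/
noncomputable def componentCost (w : β → ℝ) (x : ∀ n, β → α n) (l : ℝ) (p : ∀ n, α n → ℝ) : ℝ :=
  l - ∑ j, w j * (log l + ∑ n, log (p n (x n j)))

variable [∀ n, Fintype (α n)] [∀ n, DecidableEq (α n)] {w : β → ℝ}

lemma componentCost_eq_sub_mass_mul_sum (hM : ∑ j, w j ≠ 0) (x : ∀ n, β → α n) (l : ℝ)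
    (p : ∀ n, α n → ℝ) :
    componentCost w x l p = l - (∑ j, w j) * log l -
      (∑ j, w j) * ∑ n, ∑ i, normalizedMarginal w (x n) i * log (p n i) := by
  have hfactor (n : ι) := mass_mul_sum_normalizedMarginal_mul hM (x n) fun i => log (p n i)
  simp_rw [componentCost, mul_add, Finset.sum_add_distrib, Finset.mul_sum Finset.univ _ (w _)]
  rw [Finset.sum_comm, ← Finset.sum_mul, Finset.mul_sum Finset.univ, ← sub_sub]
  simp_rw [hfactor]

lemma componentCost_normalizedMarginal_le (hw : ∀ j, 0 ≤ w j) (hM : 0 < ∑ j, w j)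
    (x : ∀ n, β → α n) {l : ℝ} (hl : 0 < l) {p : ∀ n, α n → ℝ} (hp : ∀ n i, 0 ≤ p n i)
    (hp_sum : ∀ n, ∑ i, p n i ≤ 1) (hp_pos : ∀ n i, 0 < marginal w (x n) i → 0 < p n i) :
    componentCost w x (∑ j, w j) (fun n => normalizedMarginal w (x n)) ≤
      componentCost w x l p := by
  have hscale := mul_log_sub_le_mul_log_sub_self hM.le hl.le fun _ => hl
  have hfactors : ∑ n, ∑ i, normalizedMarginal w (x n) i * log (p n i) ≤
      ∑ n, ∑ i, normalizedMarginal w (x n) i * log (normalizedMarginal w (x n) i) :=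
    Finset.sum_le_sum fun n _ => sum_mul_log_le_sum_mul_log_self
      (fun i _ => normalizedMarginal_nonneg hw (x n) i) (fun i _ => hp n i)
      (fun i _ hi => hp_pos n i (marginal_pos_of_normalizedMarginal_pos hw hi))
      ((hp_sum n).trans_eq (sum_normalizedMarginal hM.ne' (x n)).symm)
  have hfactors_mass := mul_le_mul_of_nonneg_left hfactors hM.le
  rw [componentCost_eq_sub_mass_mul_sum hM.ne', componentCost_eq_sub_mass_mul_sum hM.ne']
  linarith

end Component

section EMUpdate

variable {β ι κ : Type*} {α : ι → Type*}

/-- Feasibility of a scale vector and factor matrices, with components indexed by `κ` instead of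
`Fin K`. -/
structure IsFeasible [∀ n, Fintype (α n)] (lam : κ → ℝ) (P : ∀ n, α n → κ → ℝ) : Prop where
  scale_nonneg : ∀ k, 0 ≤ lam k
  factor_nonneg : ∀ n i k, 0 ≤ P n i k
  sum_factor : ∀ n k, ∑ i, P n i k = 1

/-- The share `Y_j Ψ_{jk}` of the data at the cell `j` that is attributed to the component `k`. -/
def componentWeight (Y : β → ℝ) (Ψ : β → κ → ℝ) (k : κ) (j : β) : ℝ :=
  Y j * Ψ j k

/-- The component mass `M_k`, which is also the updated scale `λ⁺_k`. -/
def componentMass [Fintype β] (Y : β → ℝ) (Ψ : β → κ → ℝ) (k : κ) : ℝ :=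
  ∑ j, componentWeight Y Ψ k j

/-- The updated factor `P⁺^(n)_{ik} = y^(n)_{ik} / M_k`. -/
noncomputable def emFactor [Fintype β] [∀ n, DecidableEq (α n)] (x : ∀ n, β → α n) (Y : β → ℝ)
    (Ψ : β → κ → ℝ) (n : ι) (i : α n) (k : κ) : ℝ :=
  normalizedMarginal (componentWeight Y Ψ k) (x n) i

lemma componentWeight_nonneg {Y : β → ℝ} {Ψ : β → κ → ℝ} (hY : ∀ j, 0 ≤ Y j)
    (hΨ : ∀ j k, 0 ≤ Ψ j k) (k : κ) (j : β) : 0 ≤ componentWeight Y Ψ k j :=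
  mul_nonneg (hY j) (hΨ j k)

lemma isFeasible_componentMass_emFactor [Fintype β] [∀ n, Fintype (α n)]
    [∀ n, DecidableEq (α n)] (x : ∀ n, β → α n) {Y : β → ℝ} {Ψ : β → κ → ℝ} (hY : ∀ j, 0 ≤ Y j)
    (hΨ : ∀ j k, 0 ≤ Ψ j k) (hM : ∀ k, 0 < componentMass Y Ψ k) :
    IsFeasible (componentMass Y Ψ) (emFactor x Y Ψ) where
  scale_nonneg k := (hM k).le
  factor_nonneg n i k := normalizedMarginal_nonneg (componentWeight_nonneg hY hΨ k) (x n) i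
  sum_factor n k := sum_normalizedMarginal (hM k).ne' (x n)

end EMUpdate

section Surrogate

variable {β ι κ : Type*} {α : ι → Type*} [Fintype ι] [Fintype κ]

/-- The posterior weight `Ψ_{jk}` of the component `k` at a cell `j` with coordinates `x n j`. -/
noncomputable def posterior (x : ∀ n, β → α n) (lam : κ → ℝ) (P : ∀ n, α n → κ → ℝ)
    (j : β) (k : κ) : ℝ :=
  lam k * (∏ n, P n (x n j) k) / ∑ c, lam c * ∏ n, P n (x n j) c

lemma posterior_nonneg (x : ∀ n, β → α n) {lam : κ → ℝ} {P : ∀ n, α n → κ → ℝ}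
    (hlam : ∀ k, 0 ≤ lam k) (hP : ∀ n i k, 0 ≤ P n i k) (j : β) (k : κ) :
    0 ≤ posterior x lam P j k :=
  have hterm (c : κ) : 0 ≤ lam c * ∏ n, P n (x n j) c :=
    mul_nonneg (hlam c) (Finset.prod_nonneg fun n _ => hP n _ c)
  div_nonneg (hterm k) (Finset.sum_nonneg fun c _ => hterm c)

variable [Fintype β]

/-- The surrogate `G` for data `Y` and arbitrary weights `Ψ`. The cells form any finite type `β`
with coordinate maps `x n : β → α n`; full tensors are the case of a product type and its
projections. -/
noncomputable def surrogate (x : ∀ n, β → α n) (Y : β → ℝ) (Ψ : β → κ → ℝ)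
    (lam : κ → ℝ) (P : ∀ n, α n → κ → ℝ) : ℝ :=
  -(∑ j, Y j * ∑ k, Ψ j k * (log (lam k) + (∑ n, log (P n (x n j) k)) - log (Ψ j k))) +
    ∑ k, lam k

lemma surrogate_eq_sum_componentCost_add (x : ∀ n, β → α n) (Y : β → ℝ) (Ψ : β → κ → ℝ)
    (lam : κ → ℝ) (P : ∀ n, α n → κ → ℝ) :
    surrogate x Y Ψ lam P =
      ∑ k, componentCost (componentWeight Y Ψ k) x (lam k) (fun n i => P n i k) +
        ∑ k, ∑ j, componentWeight Y Ψ k j * log (Ψ j k) := by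
  simp_rw [surrogate, componentCost, componentWeight, Finset.mul_sum Finset.univ _ (Y _)]
  rw [Finset.sum_comm, ← Finset.sum_neg_distrib, ← Finset.sum_add_distrib,
    ← Finset.sum_add_distrib]
  refine Finset.sum_congr rfl fun k _ => ?_
  simp_rw [mul_sub, Finset.sum_sub_distrib, ← mul_assoc]
  ring

variable [∀ n, Fintype (α n)] [∀ n, DecidableEq (α n)]

theorem em_update_minimizes_surrogate_general (x : ∀ n, β → α n) {Y : β → ℝ} {Ψ : β → κ → ℝ}
    (hY : ∀ j, 0 ≤ Y j) (hΨ : ∀ j k, 0 ≤ Ψ j k) (hM : ∀ k, 0 < componentMass Y Ψ k) :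
    IsFeasible (componentMass Y Ψ) (emFactor x Y Ψ) ∧
    ∀ (lam : κ → ℝ) (P : ∀ n, α n → κ → ℝ), IsFeasible lam P → (∀ k, 0 < lam k) →
      (∀ n i k, 0 < marginal (componentWeight Y Ψ k) (x n) i → 0 < P n i k) →
      surrogate x Y Ψ (componentMass Y Ψ) (emFactor x Y Ψ) ≤ surrogate x Y Ψ lam P := by
  refine ⟨isFeasible_componentMass_emFactor x hY hΨ hM, ?_⟩
  intro lam P hfeas hlam_pos hP_pos
  rw [surrogate_eq_sum_componentCost_add, surrogate_eq_sum_componentCost_add]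
  gcongr with k
  exact componentCost_normalizedMarginal_le (componentWeight_nonneg hY hΨ k) (hM k) x (hlam_pos k)
    (hfeas.factor_nonneg · · k) (fun n => (hfeas.sum_factor n k).le) (hP_pos · · k)

end Surrogate

/-- **The EM update minimizes the surrogate.**
Given posterior weights `Ψ` at a strictly positive feasible iterate `(λᵗ, Pᵗ)`,
the EM update `λ⁺ = M_k`, `P⁺^(n)_{ik} = y^(n)_{ik}/M_k` is feasible and
minimizes the surrogate `G` over the (suitably positive) feasible set. -/
theorem em_update_minimizes_surrogate
    (N : ℕ) (hN : 1 ≤ N) (J : Fin N → ℕ) (hJ : ∀ n, 1 ≤ J n)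
    (Y : (∀ n, Fin (J n)) → ℝ) (hY : ∀ j, 0 ≤ Y j)
    (hYsum : 0 < ∑ j : (∀ n, Fin (J n)), Y j)
    (K : ℕ) (hK : 1 ≤ K)
    (lamT : Fin K → ℝ) (PT : ∀ n, Fin (J n) → Fin K → ℝ)
    (hlamT : ∀ k, 0 < lamT k)
    (hPT : ∀ n i k, 0 < PT n i k)
    (hPTcol : ∀ n k, ∑ i, PT n i k = 1)
    (Ψ : (∀ n, Fin (J n)) → Fin K → ℝ)
    (hΨ : ∀ j k, Ψ j k =
      lamT k * (∏ n, PT n (j n) k) / (∑ κ, lamT κ * ∏ n, PT n (j n) κ))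
    (G : (Fin K → ℝ) → (∀ n, Fin (J n) → Fin K → ℝ) → ℝ)
    (hG : ∀ lam P, G lam P =
      -(∑ j : (∀ n, Fin (J n)), Y j * ∑ k, Ψ j k *
          (Real.log (lam k) + (∑ n, Real.log (P n (j n) k)) - Real.log (Ψ j k)))
        + ∑ k, lam k)
    (Mk : Fin K → ℝ)
    (hMk : ∀ k, Mk k = ∑ j : (∀ n, Fin (J n)), Y j * Ψ j k)
    (hMkpos : ∀ k, 0 < Mk k)
    (y : ∀ n, Fin (J n) → Fin K → ℝ)
    (hy : ∀ n i k, y n i k =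
      ∑ j : (∀ m, Fin (J m)), if j n = i then Y j * Ψ j k else 0)
    (lamP : Fin K → ℝ) (hlamP : ∀ k, lamP k = Mk k)
    (PP : ∀ n, Fin (J n) → Fin K → ℝ)
    (hPP : ∀ n i k, PP n i k = y n i k / Mk k) :
    ((∀ k, 0 ≤ lamP k) ∧ (∀ n i k, 0 ≤ PP n i k) ∧ (∀ n k, ∑ i, PP n i k = 1)) ∧
    (∀ (lam : Fin K → ℝ) (P : ∀ n, Fin (J n) → Fin K → ℝ),
      (∀ k, 0 ≤ lam k) → (∀ n i k, 0 ≤ P n i k) → (∀ n k, ∑ i, P n i k = 1) →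
      (∀ k, 0 < lam k) →
      (∀ n i k, 0 < y n i k → 0 < P n i k) →
      G lamP PP ≤ G lam P) := by
  let x : ∀ n, (∀ n, Fin (J n)) → Fin (J n) := fun n j => j n
  have hΨ_nonneg : ∀ j k, 0 ≤ Ψ j k := by
    rw [show Ψ = posterior x lamT PT from funext₂ hΨ]
    exact posterior_nonneg x (fun k => (hlamT k).le) fun n i k => (hPT n i k).le
  obtain rfl : G = surrogate x Y Ψ := funext₂ hG
  obtain rfl : Mk = componentMass Y Ψ := funext hMk
  obtain rfl : y = fun n i k => marginal (componentWeight Y Ψ k) (x n) i :=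
    funext fun n => funext₂ (hy n)
  obtain rfl : lamP = componentMass Y Ψ := funext hlamP
  obtain rfl : PP = emFactor x Y Ψ := funext fun n => funext₂ (hPP n)
  obtain ⟨hfeas, hmin⟩ := em_update_minimizes_surrogate_general x hY hΨ_nonneg hMkpos
  exact ⟨⟨hfeas.scale_nonneg, hfeas.factor_nonneg, hfeas.sum_factor⟩,
    fun lam P hlam hP hPcol => hmin lam P ⟨hlam, hP, hPcol⟩⟩
end

section
/- Let K ≥ 1 and let (λᵗ, Pᵗ) be a rank-K feasible point with λᵗ_k > 0 for all k and Pᵗ^(n)_{i k} > 0 for all n, i, k. Define Ψ_{j k} = λᵗ_k ∏_n Pᵗ^(n)_{j_n k} / (∑_κ λᵗ_κ ∏_n Pᵗ^(n)_{j_n κ}), M_k = ∑_j Y_j Ψ_{j k}, and y^(n)_{i k} = ∑_{j : j_n = i} Y_j Ψ_{j k}, and assume M_k > 0 for all k. Then the EM update λ⁺_k = M_k, P⁺^(n)_{i k} = y^(n)_{i k} / M_k does not increase the generalized KL loss: L(λ⁺, P⁺) ≤ L(λᵗ, Pᵗ). -/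
/-!
Split each datum `Y j` over the components `k` as `q j k = Y j * Ψ j k`. By the log-sum inequality
the loss at any parameter is, up to a constant depending on `Y` alone, at most the Kullback–Leibler
divergence between `q` and the array of component terms, with equality at the current iterate
because `q` is proportional to these terms along each row. That divergence separates into one Gibbs
problem per column of each factor and one scalar problem per weight, all solved by the normalized
marginals of `q`, that is, by the EM update. So the three comparisons
`loss(new) ≤ divergence(new) ≤ divergence(old) = loss(old)` give the result.
-/

open Finset Real

section Gibbs

variable {ι : Type*} {s : Finset ι} {u v : ι → ℝ}

lemma sub_le_mul_log_sub_log {a b : ℝ} (ha : 0 ≤ a) (hb : 0 ≤ b) (hab : b = 0 → a = 0) :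
    a - b ≤ a * (log a - log b) := by
  rcases ha.eq_or_lt with rfl | ha
  · simpa using hb
  · have hb : 0 < b := hb.lt_of_ne' fun h => ha.ne' (hab h)
    have hlog : log (b / a) ≤ b / a - 1 := log_le_sub_one_of_pos (div_pos hb ha)
    rw [log_div hb.ne' ha.ne'] at hlog
    calc a - b = a * (1 - b / a) := by field_simp
      _ ≤ a * (log a - log b) := mul_le_mul_of_nonneg_left (by linarith) ha.le

/-- The log-sum inequality. -/
lemma sum_mul_log_sum_sub_log_sum_le (hu : ∀ i ∈ s, 0 ≤ u i) (hv : ∀ i ∈ s, 0 ≤ v i)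
    (huv : ∀ i ∈ s, v i = 0 → u i = 0) :
    (∑ i ∈ s, u i) * (log (∑ i ∈ s, u i) - log (∑ i ∈ s, v i)) ≤
      ∑ i ∈ s, u i * (log (u i) - log (v i)) := by
  set U := ∑ i ∈ s, u i with hU
  set V := ∑ i ∈ s, v i with hV
  rcases (sum_nonneg hu).eq_or_lt with hU0 | hUpos
  · have hu0 : ∀ i ∈ s, u i = 0 := (sum_eq_zero_iff_of_nonneg hu).1 hU0.symm
    rw [hU, ← hU0, zero_mul, sum_eq_zero fun i hi => by rw [hu0 i hi, zero_mul]]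
  have hVpos : 0 < V := (sum_nonneg hv).lt_of_ne' fun hV0 =>
    hUpos.ne' (sum_eq_zero fun i hi => huv i hi ((sum_eq_zero_iff_of_nonneg hv).1 hV0 i hi))
  have hc : 0 < U / V := div_pos hUpos hVpos
  -- Rescaling `v` to the total mass of `u` makes the linear terms of the pointwise bound cancel.
  have hpointwise : ∀ i ∈ s,
      u i - U / V * v i ≤ u i * (log (u i) - log (v i)) - u i * (log U - log V) := by
    intro i hi
    rcases eq_or_ne (v i) 0 with hvi | hvi
    · simp [hvi, huv i hi hvi]
    · have h := sub_le_mul_log_sub_log (hu i hi) (mul_nonneg hc.le (hv i hi))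
        fun h => absurd h (mul_ne_zero hc.ne' hvi)
      rw [log_mul hc.ne' hvi, log_div hUpos.ne' hVpos.ne'] at h
      linarith
  have hsum := sum_le_sum hpointwise
  rw [sum_sub_distrib, sum_sub_distrib, ← mul_sum, ← sum_mul, ← hU, ← hV,
    div_mul_cancel₀ U hVpos.ne', sub_self] at hsum
  linarith

lemma sum_mul_log_le_sum_mul_log_normalized {p : ι → ℝ} (hu : ∀ i ∈ s, 0 ≤ u i)
    (hv : ∀ i ∈ s, 0 ≤ v i) (huv : ∀ i ∈ s, v i = 0 → u i = 0) (hvsum : ∑ i ∈ s, v i ≤ 1)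
    (hp : ∀ i ∈ s, (∑ i ∈ s, u i) * p i = u i) :
    ∑ i ∈ s, u i * log (v i) ≤ ∑ i ∈ s, u i * log (p i) := by
  have hlogp : ∀ i ∈ s, u i * log (p i) = u i * log (u i) - u i * log (∑ i ∈ s, u i) := by
    intro i hi
    rcases eq_or_ne (u i) 0 with hui | hui
    · simp [hui]
    · have hne : (∑ i ∈ s, u i) * p i ≠ 0 := by rwa [hp i hi]
      have hlog := log_mul (left_ne_zero_of_mul hne) (right_ne_zero_of_mul hne)
      rw [hp i hi] at hlog
      rw [hlog]
      ring
  have hlogv : (∑ i ∈ s, u i) * log (∑ i ∈ s, v i) ≤ 0 :=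
    mul_nonpos_of_nonneg_of_nonpos (sum_nonneg hu) (log_nonpos (sum_nonneg hv) hvsum)
  have hlogsum := sum_mul_log_sum_sub_log_sum_le hu hv huv
  simp only [mul_sub, sum_sub_distrib] at hlogsum
  rw [sum_congr rfl hlogp, sum_sub_distrib, ← sum_mul]
  linarith

end Gibbs

section Model

variable {ι κ : Type*} {α : ι → Type*} [Fintype ι]

/-- The `k`-th rank-one term `λ_k ∏ₙ P⁽ⁿ⁾_{jₙ k}` of the nonnegative CP model, at the entry `j`. -/
def cpTerm (lam : κ → ℝ) (P : ∀ n, α n → κ → ℝ) (j : ∀ n, α n) (k : κ) : ℝ :=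
  lam k * ∏ n, P n (j n) k

/-- The entry `j` of the tensor represented by the CP model with weights `lam` and factors `P`. -/
def cpModel [Fintype κ] (lam : κ → ℝ) (P : ∀ n, α n → κ → ℝ) (j : ∀ n, α n) : ℝ :=
  ∑ k, cpTerm lam P j k

/-- The generalized Kullback–Leibler loss of a CP model on the data `Y`. It omits the terms that
depend only on `Y`, and counts the total mass of the model as `∑ k, lam k`, which is its value
when the factor columns sum to one. -/
noncomputable def klLoss [DecidableEq ι] [∀ n, Fintype (α n)] [Fintype κ]
    (Y : (∀ n, α n) → ℝ) (lam : κ → ℝ) (P : ∀ n, α n → κ → ℝ) : ℝ :=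
  -(∑ j, Y j * log (cpModel lam P j)) + ∑ k, lam k

/-- The complete-data counterpart of `klLoss`, in which the share `q j k` of the entry `j` is
attributed to the component `k`. It keeps the term `q log q`, so that it majorizes the loss of the
row sums of `q` up to a constant. -/
noncomputable def completeKLLoss [DecidableEq ι] [∀ n, Fintype (α n)] [Fintype κ]
    (q : (∀ n, α n) → κ → ℝ) (lam : κ → ℝ) (P : ∀ n, α n → κ → ℝ) : ℝ :=
  ∑ j, ∑ k, q j k * (log (q j k) - log (cpTerm lam P j k)) + ∑ k, lam k

/-- The E-step: the datum `Y j` shared among the components in proportion to their terms, written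
`Y_j Ψ_{jk}` with posterior weights `Ψ`. -/
noncomputable def expectedShare [Fintype κ] (Y : (∀ n, α n) → ℝ) (lam : κ → ℝ)
    (P : ∀ n, α n → κ → ℝ) (j : ∀ n, α n) (k : κ) : ℝ :=
  Y j * (cpTerm lam P j k / cpModel lam P j)

/-- The M-step: the weights and the factor columns are the marginals of the shares `q`. The
normalization of the columns is stated without division, so that a column of weight zero
is unconstrained. -/
structure IsMarginalFit [DecidableEq ι] [∀ n, Fintype (α n)] [∀ n, DecidableEq (α n)]
    (q : (∀ n, α n) → κ → ℝ) (lam : κ → ℝ) (P : ∀ n, α n → κ → ℝ) : Prop where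
  weight_eq : ∀ k, lam k = ∑ j, q j k
  weight_mul_factor_eq : ∀ n i k, lam k * P n i k = ∑ j with j n = i, q j k

variable {lam : κ → ℝ} {P : ∀ n, α n → κ → ℝ}

lemma cpTerm_nonneg (hlam : ∀ k, 0 ≤ lam k) (hP : ∀ n i k, 0 ≤ P n i k) (j : ∀ n, α n) (k : κ) :
    0 ≤ cpTerm lam P j k :=
  mul_nonneg (hlam k) (prod_nonneg fun n _ => hP n (j n) k)

lemma cpTerm_pos (hlam : ∀ k, 0 < lam k) (hP : ∀ n i k, 0 < P n i k) (j : ∀ n, α n) (k : κ) :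
    0 < cpTerm lam P j k :=
  mul_pos (hlam k) (prod_pos fun n _ => hP n (j n) k)

lemma cpTerm_ne_zero_iff {j : ∀ n, α n} {k : κ} :
    cpTerm lam P j k ≠ 0 ↔ lam k ≠ 0 ∧ ∀ n, P n (j n) k ≠ 0 := by
  simp only [cpTerm, mul_ne_zero_iff, prod_ne_zero_iff, mem_univ, forall_const]

lemma log_cpTerm {j : ∀ n, α n} {k : κ} (h : cpTerm lam P j k ≠ 0) :
    log (cpTerm lam P j k) = log (lam k) + ∑ n, log (P n (j n) k) := by
  obtain ⟨hlam, hP⟩ := cpTerm_ne_zero_iff.1 h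
  rw [cpTerm, log_mul hlam (prod_ne_zero_iff.2 fun n _ => hP n), log_prod fun n _ => hP n]

section EStep

variable [Fintype κ] {Y : (∀ n, α n) → ℝ}

lemma expectedShare_nonneg (hY : ∀ j, 0 ≤ Y j) (hterm : ∀ j k, 0 ≤ cpTerm lam P j k)
    (j : ∀ n, α n) (k : κ) : 0 ≤ expectedShare Y lam P j k :=
  mul_nonneg (hY j) (div_nonneg (hterm j k) (sum_nonneg fun k _ => hterm j k))

lemma expectedShare_eq_zero_of_cpTerm_eq_zero {j : ∀ n, α n} {k : κ}
    (h : cpTerm lam P j k = 0) : expectedShare Y lam P j k = 0 := by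
  rw [expectedShare, h, zero_div, mul_zero]

lemma sum_expectedShare (hX : ∀ j, cpModel lam P j = 0 → Y j = 0) (j : ∀ n, α n) :
    ∑ k, expectedShare Y lam P j k = Y j := by
  simp only [expectedShare, ← mul_sum, ← sum_div]
  rcases eq_or_ne (cpModel lam P j) 0 with h | h
  · rw [hX j h, zero_mul]
  · rw [← cpModel, div_self h, mul_one]

lemma expectedShare_mul_log_sub_log (hX : ∀ j, cpModel lam P j = 0 → Y j = 0)
    (j : ∀ n, α n) (k : κ) :
    expectedShare Y lam P j k * (log (expectedShare Y lam P j k) - log (cpTerm lam P j k)) =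
      expectedShare Y lam P j k * (log (Y j) - log (cpModel lam P j)) := by
  rcases eq_or_ne (Y j) 0 with hYj | hYj
  · simp [expectedShare, hYj]
  rcases eq_or_ne (cpTerm lam P j k) 0 with hterm | hterm
  · simp only [expectedShare_eq_zero_of_cpTerm_eq_zero hterm, zero_mul]
  · have hmodel : cpModel lam P j ≠ 0 := mt (hX j) hYj
    congr 1
    rw [expectedShare, log_mul hYj (div_ne_zero hterm hmodel), log_div hterm hmodel]
    ring

variable [DecidableEq ι] [∀ n, Fintype (α n)]

lemma klLoss_add_eq_completeKLLoss_expectedShare (hX : ∀ j, cpModel lam P j = 0 → Y j = 0) :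
    klLoss Y lam P + ∑ j, Y j * log (Y j) =
      completeKLLoss (expectedShare Y lam P) lam P := by
  simp only [klLoss, completeKLLoss, expectedShare_mul_log_sub_log hX, ← sum_mul,
    sum_expectedShare hX, mul_sub, sum_sub_distrib]
  ring

lemma klLoss_add_le_completeKLLoss {q : (∀ n, α n) → κ → ℝ} (hq : ∀ j k, 0 ≤ q j k)
    (hqY : ∀ j, ∑ k, q j k = Y j) (hterm : ∀ j k, 0 ≤ cpTerm lam P j k)
    (hac : ∀ j k, cpTerm lam P j k = 0 → q j k = 0) :
    klLoss Y lam P + ∑ j, Y j * log (Y j) ≤ completeKLLoss q lam P := by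
  have hrow : ∀ j, Y j * (log (Y j) - log (cpModel lam P j)) ≤
      ∑ k, q j k * (log (q j k) - log (cpTerm lam P j k)) := fun j => by
    rw [← hqY]
    exact sum_mul_log_sum_sub_log_sum_le (fun k _ => hq j k) (fun k _ => hterm j k)
      fun k _ => hac j k
  have hsum := sum_le_sum fun j (_ : j ∈ univ) => hrow j
  simp only [mul_sub, sum_sub_distrib] at hsum
  simp only [klLoss, completeKLLoss, mul_sub, sum_sub_distrib]
  linarith

end EStep

section MStep

variable [DecidableEq ι] [∀ n, Fintype (α n)] [∀ n, DecidableEq (α n)]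
  {q : (∀ n, α n) → κ → ℝ} {lam' : κ → ℝ} {P' : ∀ n, α n → κ → ℝ}

lemma sum_mul_log_cpTerm {k : κ} (hac : ∀ j, cpTerm lam P j k = 0 → q j k = 0) :
    ∑ j, q j k * log (cpTerm lam P j k) =
      (∑ j, q j k) * log (lam k) +
        ∑ n, ∑ i, (∑ j with j n = i, q j k) * log (P n i k) := by
  have hlog : ∀ j, q j k * log (cpTerm lam P j k) =
      q j k * log (lam k) + ∑ n, q j k * log (P n (j n) k) := fun j => by
    rcases eq_or_ne (cpTerm lam P j k) 0 with h | h
    · simp [hac j h]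
    · rw [log_cpTerm h, mul_add, mul_sum]
  have hfiber : ∀ n, ∑ j, q j k * log (P n (j n) k) =
      ∑ i, (∑ j with j n = i, q j k) * log (P n i k) := fun n => by
    rw [← sum_fiberwise univ (fun j : ∀ n, α n => j n)]
    refine sum_congr rfl fun i _ => ?_
    rw [sum_mul]
    exact sum_congr rfl fun j hj => by rw [(mem_filter.1 hj).2]
  rw [sum_congr rfl fun j _ => hlog j, sum_add_distrib, ← sum_mul, sum_comm,
    sum_congr rfl fun n _ => hfiber n]

namespace IsMarginalFit

lemma cpTerm_ne_zero (hfit : IsMarginalFit q lam P) (hq : ∀ j k, 0 ≤ q j k)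
    {j : ∀ n, α n} {k : κ} (hjk : q j k ≠ 0) : cpTerm lam P j k ≠ 0 := by
  have hpos : 0 < q j k := (hq j k).lt_of_ne' hjk
  refine cpTerm_ne_zero_iff.2 ⟨?_, fun n => right_ne_zero_of_mul (a := lam k) ?_⟩
  · rw [hfit.weight_eq]
    exact (sum_pos' (fun j _ => hq j k) ⟨j, mem_univ j, hpos⟩).ne'
  · rw [hfit.weight_mul_factor_eq]
    exact (sum_pos' (fun j _ => hq j k) ⟨j, by simp, hpos⟩).ne'

lemma cpTerm_nonneg (hfit : IsMarginalFit q lam P) (hq : ∀ j k, 0 ≤ q j k)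
    (j : ∀ n, α n) (k : κ) : 0 ≤ cpTerm lam P j k := by
  have hlam : 0 ≤ lam k := hfit.weight_eq k ▸ sum_nonneg fun j _ => hq j k
  rcases hlam.eq_or_lt with hlam | hlam
  · rw [cpTerm, ← hlam, zero_mul]
  · refine mul_nonneg hlam.le (prod_nonneg fun n _ => nonneg_of_mul_nonneg_right ?_ hlam)
    rw [hfit.weight_mul_factor_eq]
    exact sum_nonneg fun j _ => hq j k

lemma sum_mul_log_cpTerm_sub_le (hfit : IsMarginalFit q lam' P') (hq : ∀ j k, 0 ≤ q j k) {k : κ}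
    (hlam : 0 ≤ lam k) (hP : ∀ n i, 0 ≤ P n i k) (hPcol : ∀ n, ∑ i, P n i k ≤ 1)
    (hac : ∀ j, cpTerm lam P j k = 0 → q j k = 0) :
    ∑ j, q j k * log (cpTerm lam P j k) - lam k ≤
      ∑ j, q j k * log (cpTerm lam' P' j k) - lam' k := by
  have hac_lam : lam k = 0 → ∑ j, q j k = 0 := fun h =>
    sum_eq_zero fun j _ => hac j (by rw [cpTerm, h, zero_mul])
  have hac_P : ∀ n i, P n i k = 0 → ∑ j with j n = i, q j k = 0 := fun n i h =>
    sum_eq_zero fun j hj => hac j <| by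
      rw [cpTerm, prod_eq_zero (mem_univ n) (by rwa [(mem_filter.1 hj).2]), mul_zero]
  have hweight := sub_le_mul_log_sub_log (sum_nonneg fun j _ => hq j k) hlam hac_lam
  have hfactor : ∀ n, ∑ i, (∑ j with j n = i, q j k) * log (P n i k) ≤
      ∑ i, (∑ j with j n = i, q j k) * log (P' n i k) := fun n =>
    sum_mul_log_le_sum_mul_log_normalized (fun i _ => sum_nonneg fun j _ => hq j k)
      (fun i _ => hP n i) (fun i _ => hac_P n i) (hPcol n) fun i _ => by
        rw [sum_fiberwise, ← hfit.weight_eq, hfit.weight_mul_factor_eq]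
  have hfactors := sum_le_sum fun n (_ : n ∈ univ) => hfactor n
  rw [sum_mul_log_cpTerm hac,
    sum_mul_log_cpTerm fun j => not_imp_not.1 (hfit.cpTerm_ne_zero hq), hfit.weight_eq k]
  linarith

variable [Fintype κ]

lemma completeKLLoss_le (hfit : IsMarginalFit q lam' P') (hq : ∀ j k, 0 ≤ q j k)
    (hlam : ∀ k, 0 ≤ lam k) (hP : ∀ n i k, 0 ≤ P n i k) (hPcol : ∀ n k, ∑ i, P n i k ≤ 1)
    (hac : ∀ j k, cpTerm lam P j k = 0 → q j k = 0) :
    completeKLLoss q lam' P' ≤ completeKLLoss q lam P := by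
  have hsum := sum_le_sum fun k (_ : k ∈ univ) => hfit.sum_mul_log_cpTerm_sub_le hq (hlam k)
    (fun n i => hP n i k) (fun n => hPcol n k) fun j => hac j k
  rw [sum_sub_distrib, sum_sub_distrib, sum_comm, sum_comm (s := univ (α := κ))] at hsum
  simp only [completeKLLoss, mul_sub, sum_sub_distrib]
  linarith

end IsMarginalFit

end MStep

/-- Hypothesis `hX` says that the initial loss is finite, which `Real.log 0 = 0` would hide. -/
theorem em_update_does_not_increase_kl_loss_general
    [DecidableEq ι] [Fintype κ] [∀ n, Fintype (α n)] [∀ n, DecidableEq (α n)]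
    {Y : (∀ n, α n) → ℝ} (hY : ∀ j, 0 ≤ Y j)
    (hlam : ∀ k, 0 ≤ lam k) (hP : ∀ n i k, 0 ≤ P n i k) (hPcol : ∀ n k, ∑ i, P n i k ≤ 1)
    (hX : ∀ j, cpModel lam P j = 0 → Y j = 0) {lam' : κ → ℝ} {P' : ∀ n, α n → κ → ℝ}
    (hfit : IsMarginalFit (expectedShare Y lam P) lam' P') :
    klLoss Y lam' P' ≤ klLoss Y lam P := by
  have hq := expectedShare_nonneg hY (cpTerm_nonneg hlam hP)
  refine le_of_add_le_add_right (a := ∑ j, Y j * log (Y j)) ?_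
  calc klLoss Y lam' P' + ∑ j, Y j * log (Y j)
      ≤ completeKLLoss (expectedShare Y lam P) lam' P' :=
        klLoss_add_le_completeKLLoss hq (sum_expectedShare hX) (hfit.cpTerm_nonneg hq)
          fun _ _ => not_imp_not.1 (hfit.cpTerm_ne_zero hq)
    _ ≤ completeKLLoss (expectedShare Y lam P) lam P :=
        hfit.completeKLLoss_le hq hlam hP hPcol fun _ _ => expectedShare_eq_zero_of_cpTerm_eq_zero
    _ = klLoss Y lam P + ∑ j, Y j * log (Y j) :=
        (klLoss_add_eq_completeKLLoss_expectedShare hX).symm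

end Model

/-- **Monotonicity of the EM iteration for generalized KL fitting.**
The EM update computed from the posterior weights `Ψ` at a strictly positive
feasible iterate `(λᵗ, Pᵗ)` does not increase the rank-`K` generalized KL
loss: `L(λ⁺, P⁺) ≤ L(λᵗ, Pᵗ)`. -/
theorem em_update_does_not_increase_kl_loss
    (N : ℕ) (hN : 1 ≤ N) (J : Fin N → ℕ) (hJ : ∀ n, 1 ≤ J n)
    (Y : (∀ n, Fin (J n)) → ℝ) (hY : ∀ j, 0 ≤ Y j)
    (hYsum : 0 < ∑ j : (∀ n, Fin (J n)), Y j)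
    (K : ℕ) (hK : 1 ≤ K)
    (L : (Fin K → ℝ) → (∀ n, Fin (J n) → Fin K → ℝ) → ℝ)
    (hL : ∀ lam P, L lam P =
      -(∑ j : (∀ n, Fin (J n)),
          Y j * Real.log (∑ k, lam k * ∏ n, P n (j n) k)) + ∑ k, lam k)
    (lamT : Fin K → ℝ) (PT : ∀ n, Fin (J n) → Fin K → ℝ)
    (hlamT : ∀ k, 0 < lamT k)
    (hPT : ∀ n i k, 0 < PT n i k)
    (hPTcol : ∀ n k, ∑ i, PT n i k = 1)
    (Ψ : (∀ n, Fin (J n)) → Fin K → ℝ)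
    (hΨ : ∀ j k, Ψ j k =
      lamT k * (∏ n, PT n (j n) k) / (∑ κ, lamT κ * ∏ n, PT n (j n) κ))
    (Mk : Fin K → ℝ)
    (hMk : ∀ k, Mk k = ∑ j : (∀ n, Fin (J n)), Y j * Ψ j k)
    (hMkpos : ∀ k, 0 < Mk k)
    (y : ∀ n, Fin (J n) → Fin K → ℝ)
    (hy : ∀ n i k, y n i k =
      ∑ j : (∀ m, Fin (J m)), if j n = i then Y j * Ψ j k else 0)
    (lamP : Fin K → ℝ) (hlamP : ∀ k, lamP k = Mk k)
    (PP : ∀ n, Fin (J n) → Fin K → ℝ)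
    (hPP : ∀ n i k, PP n i k = y n i k / Mk k) :
    L lamP PP ≤ L lamT PT := by
  have hX : ∀ j, 0 < cpModel lamT PT j := fun j =>
    sum_pos (fun k _ => cpTerm_pos hlamT hPT j k) ⟨⟨0, hK⟩, mem_univ _⟩
  have hq : ∀ j k, Y j * Ψ j k = expectedShare Y lamT PT j k := fun j k => by rw [hΨ]; rfl
  have hfit : IsMarginalFit (expectedShare Y lamT PT) lamP PP :=
    { weight_eq := fun k => by simp only [hlamP, hMk, hq]
      weight_mul_factor_eq := fun n i k => by
        rw [hlamP, hPP, mul_div_cancel₀ _ (hMkpos k).ne', hy, sum_filter]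
        simp only [hq] }
  rw [hL, hL]
  exact em_update_does_not_increase_kl_loss_general hY (fun k => (hlamT k).le)
    (fun n i k => (hPT n i k).le) (fun n k => (hPTcol n k).le) (fun j h => absurd h (hX j).ne') hfit
end
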